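/- Let I and P be homogeneous ideals in k[x_0,...,x_n] over a perfect field k, with I unmixed radical of projective dimension d ≥ 0 and P prime of projective dimension e > d. Then there exists a homogeneous polynomial f ∈ I with f ∉ P and deg f ≤ (e! · deg I)^{1/(e−d)}. -/

import Mathlib

open MvPolynomial

/-- Integer-valued binomial coefficient `C(a, b)`, zero when `a < 0` or `a < b`. -/
def ichoose (a : ℤ) (b : ℕ) : ℤ := if a < 0 then 0 else (a.toNat).choose b

/-- The Hilbert function of a (homogeneous) ideal `I ⊆ k[x₀, …, xₙ]`:
`m ↦ dim_k (k[x₀, …, xₙ]/I)_m`. -/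
noncomputable def hilbF (k : Type*) [Field k] {n : ℕ}
    (I : Ideal (MvPolynomial (Fin (n+1)) k)) (m : ℕ) : ℕ :=
  Module.finrank k ((homogeneousSubmodule (Fin (n+1)) k m).map
    (Ideal.Quotient.mkₐ k I).toLinearMap)

open scoped Classical in
/-- The Hilbert polynomial of `I` (the polynomial agreeing with the Hilbert
function for all large `m`; junk value `0` if none exists). -/
noncomputable def hilbP (k : Type*) [Field k] {n : ℕ}
    (I : Ideal (MvPolynomial (Fin (n+1)) k)) : Polynomial ℚ :=
  if h : ∃ P : Polynomial ℚ, ∀ᶠ m : ℕ in Filter.atTop,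
      (hilbF k I m : ℚ) = P.eval (m : ℚ) then h.choose else 0

/-- The (algebraic) degree of a homogeneous ideal `I` of projective dimension
`d ≥ 0`: `d! · (leading coefficient of its Hilbert polynomial)`. -/
noncomputable def idealDeg (k : Type*) [Field k] {n : ℕ}
    (I : Ideal (MvPolynomial (Fin (n+1)) k)) : ℕ :=
  ⌊((hilbP k I).natDegree.factorial : ℚ) * (hilbP k I).leadingCoeff⌋₊

/-- The projective dimension of a homogeneous ideal `I` (of dimension `≥ 0`):
the degree of its Hilbert polynomial. -/
noncomputable def idealDim (k : Type*) [Field k] {n : ℕ}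
    (I : Ideal (MvPolynomial (Fin (n+1)) k)) : ℕ :=
  (hilbP k I).natDegree

/-- A homogeneous ideal: one containing all homogeneous components of its elements. -/
def IsHomogeneousIdeal {k : Type*} [Field k] {n : ℕ}
    (I : Ideal (MvPolynomial (Fin (n+1)) k)) : Prop :=
  ∀ f ∈ I, ∀ m : ℕ, homogeneousComponent m f ∈ I

/-- `I` is unmixed of projective dimension `d`: every associated prime `P` of
`k[x₀,…,xₙ]/I` satisfies `dim k[x₀,…,xₙ]/P = d + 1` (affine Krull dimension). -/
def IsUnmixed (k : Type*) [Field k] {n : ℕ}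
    (I : Ideal (MvPolynomial (Fin (n+1)) k)) (d : ℕ) : Prop :=
  ∀ P ∈ associatedPrimes (MvPolynomial (Fin (n+1)) k)
      (MvPolynomial (Fin (n+1)) k ⧸ I),
    ringKrullDim (MvPolynomial (Fin (n+1)) k ⧸ P) = ((d + 1 : ℕ) : WithBot (WithTop ℕ))

lemma finrank_homog (k : Type*) [Field k] (s m : ℕ) :
    Module.finrank k (homogeneousSubmodule (Fin s) k m) = s.multichoose m := by
  rw [homogeneousSubmodule_eq_finsupp_supported]
  have e := AddMonoidAlgebra.supportedEquivFinsupp (S := k) (R := k) {d : Fin s →₀ ℕ | d.degree = m}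
  have hs : {d : Fin s →₀ ℕ | d.degree = m} = ↑(Finset.finsuppAntidiag (Finset.univ : Finset (Fin s)) m) := by
    ext d
    simp [Finset.mem_finsuppAntidiag, Finsupp.degree_eq_sum]
  rw [hs] at e ⊢
  rw [e.finrank_eq, Module.finrank_finsupp_self]
  simp [Finset.card_finsuppAntidiag_nat_eq_multichoose]

lemma map_homog_eq_pow {k A σ : Type*} [Field k] [CommRing A] [Algebra k A] (x : σ → A) (m : ℕ) :
    (homogeneousSubmodule σ k m).map (aeval x : MvPolynomial σ k →ₐ[k] A).toLinearMap
      = (Submodule.span k (Set.range x)) ^ m := by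
  rw [← homogeneousSubmodule_one_pow, Submodule.map_pow, homogeneousSubmodule_one_eq_span_X,
    Submodule.map_span]
  congr 2
  ext z
  simp

lemma aeval_mem_pow {k A σ : Type*} [Field k] [CommRing A] [Algebra k A] {x : σ → A} {m : ℕ}
    {p : MvPolynomial σ k} (hp : p ∈ homogeneousSubmodule σ k m) :
    aeval x p ∈ (Submodule.span k (Set.range x)) ^ m := by
  rw [← map_homog_eq_pow]
  exact ⟨p, hp, rfl⟩

lemma exists_aeval_of_mem_pow {k A σ : Type*} [Field k] [CommRing A] [Algebra k A] {x : σ → A}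
    {m : ℕ} {a : A} (ha : a ∈ (Submodule.span k (Set.range x)) ^ m) :
    ∃ p ∈ homogeneousSubmodule σ k m, aeval x p = a := by
  rw [← map_homog_eq_pow] at ha
  exact ha

/-- Taylor type comparison. -/
lemma aeval_sub_aeval_mem {k A σ : Type*} [Field k] [CommRing A] [Algebra k A]
    (x x' : σ → A) (Y Y' : Submodule k A) (hx : ∀ i, x i ∈ Y) (hx' : ∀ i, x' i ∈ Y)
    (hd : ∀ i, x i - x' i ∈ Y') (m : ℕ) (p : MvPolynomial σ k)
    (hp : p ∈ homogeneousSubmodule σ k (m + 1)) :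
    aeval x p - aeval x' p ∈ Y' * Y ^ m := by
  have hpow : ∀ (z : σ → A), (∀ i, z i ∈ Y) → ∀ (m : ℕ), ∀ p ∈ homogeneousSubmodule σ k m,
      aeval z p ∈ Y ^ m := fun z hz m p hp => by
    refine pow_le_pow_left' (?_ : Submodule.span k (Set.range z) ≤ Y) m (aeval_mem_pow hp)
    rw [Submodule.span_le]; rintro _ ⟨i, rfl⟩; exact hz i
  have h1 : ∀ l ∈ homogeneousSubmodule σ k 1, aeval x l - aeval x' l ∈ Y' := by
    intro l hl
    rw [homogeneousSubmodule_one_eq_span_X] at hl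
    induction hl using Submodule.span_induction with
    | mem l h => obtain ⟨i, rfl⟩ := h; simpa using hd i
    | zero => simp
    | add a b _ _ ha hb =>
      have := Y'.add_mem ha hb
      simp only [map_add]
      convert this using 1; ring
    | smul c a _ ha =>
      have := Y'.smul_mem c ha
      simpa [smul_sub] using this
  induction m generalizing p with
  | zero => simpa using h1 p hp
  | succ m ih =>
    rw [← homogeneousSubmodule_one_pow, pow_succ, homogeneousSubmodule_one_pow] at hp
    induction hp using Submodule.mul_induction_on' with
    | mem_mul_mem q hq l hl =>
      have e : aeval x (q * l) - aeval x' (q * l) =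
        (aeval x q - aeval x' q) * aeval x l + (aeval x l - aeval x' l) * aeval x' q := by
        simp only [map_mul]; ring
      rw [e]
      refine Submodule.add_mem _ ?_ ?_
      · rw [pow_succ, ← mul_assoc]
        refine Submodule.mul_mem_mul (ih q hq) ?_
        simpa using hpow x hx 1 l hl
      · exact Submodule.mul_mem_mul (h1 l hl) (hpow x' hx' _ q hq)
    | add a _ b _ ha hb =>
      have := Submodule.add_mem _ ha hb
      simp only [map_add]
      convert this using 1; ring

lemma pow_le_of_sup {k A : Type*} [Field k] [CommRing A] [Algebra k A]
    (Y Y' Z : Submodule k A) (h : Y ≤ Y' + Z) (hZ : Z ≤ Y) (n : ℕ) :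
    Y ^ (n + 1) ≤ Y' * Y ^ n + Z ^ (n + 1) := by
  induction n with
  | zero => simpa using h
  | succ n ih =>
    calc Y ^ (n + 2) = Y ^ (n + 1) * Y := pow_succ _ _
      _ ≤ (Y' * Y ^ n + Z ^ (n + 1)) * Y := by gcongr
      _ = Y' * Y ^ (n + 1) + Z ^ (n + 1) * Y := by ring
      _ ≤ Y' * Y ^ (n + 1) + Z ^ (n + 1) * (Y' + Z) := by gcongr
      _ = Y' * Y ^ (n + 1) + (Y' * Z ^ (n + 1) + Z ^ (n + 2)) := by ring
      _ ≤ Y' * Y ^ (n + 1) + (Y' * Y ^ (n + 1) + Z ^ (n + 2)) := by gcongr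
      _ = Y' * Y ^ (n + 1) + Z ^ (n + 2) := by
        rw [← add_assoc]
        congr 1
        exact sup_idem _

lemma reduction_pow {k A : Type*} [Field k] [CommRing A] [Algebra k A]
    (Y W : Submodule k A) (N : ℕ) (h : W ^ (N + 1) ≤ Y * W ^ N) (j : ℕ) :
    W ^ (N + j) ≤ Y ^ j * W ^ N := by
  induction j with
  | zero => simp
  | succ j ih =>
    calc W ^ (N + (j + 1)) = W ^ (N + j) * W := by rw [← add_assoc, pow_succ]
      _ ≤ Y ^ j * W ^ N * W := by gcongr
      _ = Y ^ j * W ^ (N + 1) := by ring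
      _ ≤ Y ^ j * (Y * W ^ N) := by gcongr
      _ = _ := by ring

/-- a point where a homogeneous polynomial does not vanish, normalised. -/
lemma exists_point {k : Type*} [Field k] [Infinite k] {s m : ℕ} (p : MvPolynomial (Fin s) k)
    (hp : p.IsHomogeneous m) (hm : m ≠ 0) (hp0 : p ≠ 0) :
    ∃ (a : Fin s → k) (i : Fin s), a i = 1 ∧ eval a p ≠ 0 := by
  obtain ⟨a, ha⟩ : ∃ a, eval a p ≠ 0 := by
    by_contra! h
    exact hp0 (hp.eq_zero_of_forall_eval_eq_zero h)
  have hsc : ∀ (c : k) (b : Fin s → k), eval (c • b) p = c ^ m * eval b p := by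
    intro c b
    rw [eval_eq, eval_eq, Finset.mul_sum]
    refine Finset.sum_congr rfl fun d hd => ?_
    have : ∑ i, d i = m := by
      rw [hp.degree_eq_sum_deg_support hd]
      exact (Finset.sum_subset (Finset.subset_univ _) (fun i _ hi => Finsupp.notMem_support_iff.mp hi)).symm
    have h2 : ∏ i ∈ d.support, (c • b) i ^ d i = ∏ i, (c • b) i ^ d i :=
      Finset.prod_subset (Finset.subset_univ _) (fun i _ hi => by simp [Finsupp.notMem_support_iff.mp hi])
    have h3 : ∏ i ∈ d.support, b i ^ d i = ∏ i, b i ^ d i :=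
      Finset.prod_subset (Finset.subset_univ _) (fun i _ hi => by simp [Finsupp.notMem_support_iff.mp hi])
    rw [h2, h3]
    simp only [Pi.smul_apply, smul_eq_mul, mul_pow, Finset.prod_mul_distrib, Finset.prod_pow_eq_pow_sum, this]
    ring
  obtain ⟨i, hi⟩ : ∃ i, a i ≠ 0 := by
    by_contra! h
    apply ha
    have := hsc 0 a
    rw [zero_pow hm, zero_mul] at this
    rwa [show (0 : k) • a = a from by ext i; simp [h i]] at this
  refine ⟨(a i)⁻¹ • a, i, by simp [hi], ?_⟩
  rw [hsc]
  exact mul_ne_zero (pow_ne_zero _ (inv_ne_zero hi)) ha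

lemma aeval_point {k A : Type*} [Field k] [CommRing A] [Algebra k A] {s m : ℕ} (p : MvPolynomial (Fin s) k)
    (hp : p.IsHomogeneous m) (a : Fin s → k) (z : A) :
    aeval (fun i => a i • z) p = eval a p • z ^ m := by
  rw [aeval_def, eval₂_eq', eval_eq', Finset.sum_smul]
  refine Finset.sum_congr rfl fun d hd => ?_
  have : ∑ i, d i = m := by
    rw [hp.degree_eq_sum_deg_support hd]
    exact (Finset.sum_subset (Finset.subset_univ _) (fun i _ hi => Finsupp.notMem_support_iff.mp hi)).symm
  simp only [Algebra.smul_def, mul_pow, Finset.prod_mul_distrib, Finset.prod_pow_eq_pow_sum, this,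
    map_mul, map_prod, map_pow]
  ring

lemma exists_noether {k A : Type*} [Field k] [Infinite k] [CommRing A] [IsDomain A] [Algebra k A]
    (W : Submodule k A) [FiniteDimensional k W] :
    ∃ (s : ℕ) (y : Fin s → A), (∀ i, y i ∈ W) ∧
      (∀ m, ∀ p ∈ homogeneousSubmodule (Fin s) k m, aeval y p = 0 → p = 0) ∧
      ∃ N, W ^ (N + 1) ≤ Submodule.span k (Set.range y) * W ^ N := by
  classical
  let R : ℕ → Prop := fun s => ∃ y : Fin s → A, (∀ i, y i ∈ W) ∧
      ∃ N, W ^ (N + 1) ≤ Submodule.span k (Set.range y) * W ^ N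
  have hR : ∃ s, R s := by
    let b := Module.finBasis k W
    refine ⟨_, fun i => (b i : A), fun i => (b i).2, 0, ?_⟩
    have : Submodule.span k (Set.range fun i => (b i : A)) = W := by
      have := congrArg (Submodule.map W.subtype) b.span_eq
      rw [Submodule.map_span, Submodule.map_top, Submodule.range_subtype] at this
      refine Eq.trans ?_ this
      congr 1
      ext z; simp
    rw [this]; simp
  obtain ⟨y, hyW, N, hN⟩ := Nat.find_spec hR
  have hmin := fun t => Nat.find_min (H := hR) (m := t)
  generalize Nat.find hR = s at *
  refine ⟨s, y, hyW, ?_, N, hN⟩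
  intro m p hp hpy
  by_contra hp0
  have hph : p.IsHomogeneous m := hp
  rcases Nat.eq_zero_or_pos m with rfl | hm
  · rw [← totalDegree_zero_iff_isHomogeneous, totalDegree_eq_zero_iff_eq_C] at hph
    rw [hph] at hpy hp0
    simp only [aeval_C] at hpy
    rw [map_eq_zero_iff _ (algebraMap k A).injective] at hpy
    rw [hpy] at hp0; simp at hp0
  obtain ⟨n, rfl⟩ : ∃ n, m = n + 1 := ⟨m - 1, by omega⟩
  obtain ⟨a, i0, hai, hap⟩ := exists_point p hph (by omega) hp0
  obtain ⟨s, rfl⟩ : ∃ t, s = t + 1 := ⟨s - 1, by have := i0.2; omega⟩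
  apply hmin s (by omega)
  set z := y i0
  set Y := Submodule.span k (Set.range y)
  set y' : Fin s → A := fun i => y (i0.succAbove i) - a (i0.succAbove i) • z
  set Y' := Submodule.span k (Set.range y')
  have hYW : Y ≤ W := by
    rw [Submodule.span_le]; rintro _ ⟨i, rfl⟩; exact hyW i
  have hyY : ∀ i, y i ∈ Y := fun i => Submodule.subset_span ⟨i, rfl⟩
  have hd : ∀ i, y i - a i • z ∈ Y' := by
    intro i
    rcases Fin.eq_self_or_eq_succAbove i0 i with rfl | ⟨j, rfl⟩
    · simp [hai, z]
    · exact Submodule.subset_span ⟨j, rfl⟩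
  have h1 := aeval_sub_aeval_mem y (fun i => a i • z) Y Y' hyY
    (fun i => Y.smul_mem _ (hyY i0)) hd n p hp
  rw [hpy, aeval_point p hph, zero_sub, Submodule.neg_mem_iff, Submodule.smul_mem_iff _ hap] at h1
  have h2 : Y ^ (n + 1) ≤ Y' * Y ^ n := by
    refine (pow_le_of_sup Y Y' (Submodule.span k {z}) ?_ ?_ n).trans ?_
    · rw [Submodule.span_le]; rintro _ ⟨i, rfl⟩
      have : y i = (y i - a i • z) + a i • z := by abel
      rw [this]
      exact Submodule.add_mem_sup (hd i) (Submodule.smul_mem _ _ (Submodule.mem_span_singleton_self z))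
    · rw [Submodule.span_le]; rintro _ rfl; exact hyY i0
    · refine sup_le le_rfl ?_
      rw [Submodule.span_pow, Submodule.span_le]
      simpa using h1
  refine ⟨y', fun i => W.sub_mem (hyW _) (W.smul_mem _ (hyW _)), n + N, ?_⟩
  calc W ^ (n + N + 1) = W ^ (N + (n + 1)) := by congr 1; omega
    _ ≤ Y ^ (n + 1) * W ^ N := reduction_pow Y W N hN _
    _ ≤ Y' * Y ^ n * W ^ N := by gcongr
    _ ≤ Y' * W ^ n * W ^ N := by gcongr
    _ = Y' * W ^ (n + N) := by ring

lemma exists_dg {k : Type*} [Field k] [Infinite k] {s M : ℕ} (Δ : MvPolynomial (Fin s) k)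
    (hΔ : Δ.IsHomogeneous M) (hM : M ≠ 0) (h0 : Δ ≠ 0) :
    ∃ (i0 : Fin s) (ψ : MvPolynomial (Fin s) k →ₐ[k] MvPolynomial (Fin s) k),
      Function.Injective ψ ∧ (∀ m p, p.IsHomogeneous m → (ψ p).IsHomogeneous m) ∧
      M ≤ degreeOf i0 (ψ Δ) := by
  classical
  obtain ⟨a, i0, hai, hap⟩ := exists_point Δ hΔ hM h0
  let b : Fin s → k := fun i => if i = i0 then 0 else a i
  let ψ : MvPolynomial (Fin s) k →ₐ[k] MvPolynomial (Fin s) k := aeval fun i => X i + C (b i) * X i0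
  let ψ' : MvPolynomial (Fin s) k →ₐ[k] MvPolynomial (Fin s) k := aeval fun i => X i - C (b i) * X i0
  have hb0 : b i0 = 0 := by simp [b]
  have hcomp : ψ'.comp ψ = AlgHom.id k _ := by
    ext1 i
    simp only [ψ, ψ', AlgHom.comp_apply, aeval_X, map_add, map_mul, algHom_C, hb0, AlgHom.id_apply]
    simp
  have hhom : ∀ m p, p.IsHomogeneous m → (ψ p).IsHomogeneous m := by
    intro m p hp
    have := hp.aeval (fun i => (X i + C (b i) * X i0 : MvPolynomial (Fin s) k)) (n := 1)
      (fun i => (isHomogeneous_X k i).add (isHomogeneous_C_mul_X (b i) i0))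
    rwa [one_mul] at this
  refine ⟨i0, ψ, ?_, hhom, ?_⟩
  · intro p q h
    have := congrArg ψ' h
    rwa [← AlgHom.comp_apply, ← AlgHom.comp_apply, hcomp] at this
  · have h1 : eval (Pi.single i0 1) (ψ Δ) = eval a Δ := by
      have : ((aeval (Pi.single i0 (1 : k)) : MvPolynomial (Fin s) k →ₐ[k] k).comp ψ) = aeval a := by
        ext1 i
        by_cases h : i = i0
        · subst h; simp [ψ, b, hai]
        · simp [ψ, b, h]
      have := congrArg (fun g => g Δ) this
      simpa [aeval_eq_eval] using this
    have h2 : eval (Pi.single i0 1) (ψ Δ) ≠ 0 := by rw [h1]; exact hap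
    rw [eval_eq] at h2
    obtain ⟨d, hd, hne⟩ := Finset.exists_ne_zero_of_sum_ne_zero h2
    have hsupp : ∀ i, i ≠ i0 → d i = 0 := by
      intro i hi
      by_contra hdi
      apply hne
      have : ∏ i ∈ d.support, (Pi.single i0 (1 : k) : Fin s → k) i ^ d i = 0 :=
        Finset.prod_eq_zero (Finsupp.mem_support_iff.mpr hdi) (by simp [hi, hdi])
      rw [this, mul_zero]
    have hdeg := (hhom M Δ hΔ).degree_eq_sum_deg_support hd
    have : M = d i0 := by
      rw [hdeg]
      rw [Finset.sum_subset (Finset.subset_univ _) (fun i _ hi => Finsupp.notMem_support_iff.mp hi)]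
      exact Finset.sum_eq_single i0 (fun i _ hi => hsupp i hi) (by simp)
    rw [this]
    exact monomial_le_degreeOf i0 hd

section core

variable {k A : Type*} [Field k] [CommRing A] [Algebra k A]

/-- Linear combinations of `e` with coefficients homogeneous forms of degree `j` in `y`. -/
noncomputable def Tmap {s D : ℕ} (y : Fin s → A) (e : Fin D → A) (j : ℕ) :
    (Fin D → homogeneousSubmodule (Fin s) k j) →ₗ[k] A :=
  ∑ i, (LinearMap.mulRight k (e i)) ∘ₗ (aeval y).toLinearMap ∘ₗ
    (homogeneousSubmodule (Fin s) k j).subtype ∘ₗ LinearMap.proj i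

lemma Tmap_apply {s D : ℕ} (y : Fin s → A) (e : Fin D → A) (j : ℕ)
    (p : Fin D → homogeneousSubmodule (Fin s) k j) :
    Tmap y e j p = ∑ i, aeval y (p i : MvPolynomial (Fin s) k) * e i := by
  simp [Tmap]

/-- Graded independence. -/
def GInd (k : Type*) {A : Type*} [Field k] [CommRing A] [Algebra k A]
    {s D : ℕ} (y : Fin s → A) (e : Fin D → A) : Prop :=
  ∀ j, ∀ p : Fin D → MvPolynomial (Fin s) k, (∀ i, (p i).IsHomogeneous j) →
    ∑ i, aeval y (p i) * e i = 0 → ∀ i, p i = 0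

lemma mem_range_Tmap {s D : ℕ} {y : Fin s → A} {e : Fin D → A} {j : ℕ} {a : A} :
    a ∈ LinearMap.range (Tmap (k := k) y e j) ↔ ∃ p : Fin D → MvPolynomial (Fin s) k,
      (∀ i, (p i).IsHomogeneous j) ∧ ∑ i, aeval y (p i) * e i = a := by
  constructor
  · rintro ⟨p, rfl⟩
    exact ⟨fun i => p i, fun i => (p i).2, (Tmap_apply _ _ _ _).symm⟩
  · rintro ⟨p, hp, rfl⟩
    exact ⟨fun i => ⟨p i, hp i⟩, Tmap_apply _ _ _ _⟩

lemma GInd.injective {s D : ℕ} {y : Fin s → A} {e : Fin D → A} (h : GInd k y e) (j : ℕ) :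
    Function.Injective (Tmap (k := k) y e j) := by
  rw [← LinearMap.ker_eq_bot, LinearMap.ker_eq_bot']
  intro p hp
  rw [Tmap_apply] at hp
  ext1 i
  exact Subtype.ext (h j (fun i => p i) (fun i => (p i).2) hp i)

instance fin_homog (s j : ℕ) : Module.Finite k (homogeneousSubmodule (Fin s) k j) :=
  Module.Finite.iff_fg.mpr (homogeneousSubmodule_fg _ _ _)

lemma mul_mem_range_Tmap {s D : ℕ} {y : Fin s → A} {e : Fin D → A} {i j : ℕ} {a : A}
    {q : MvPolynomial (Fin s) k} (hq : q.IsHomogeneous i)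
    (ha : a ∈ LinearMap.range (Tmap (k := k) y e j)) :
    aeval y q * a ∈ LinearMap.range (Tmap (k := k) y e (i + j)) := by
  rw [mem_range_Tmap] at *
  obtain ⟨p, hp, rfl⟩ := ha
  refine ⟨fun n => q * p n, fun n => hq.mul (hp n), ?_⟩
  rw [Finset.mul_sum]
  refine Finset.sum_congr rfl fun n _ => ?_
  rw [map_mul, mul_assoc]

lemma aeval_mem_pow' {s : ℕ} {y : Fin s → A} {W : Submodule k A} (hy : ∀ i, y i ∈ W) {m : ℕ}
    {p : MvPolynomial (Fin s) k} (hp : p.IsHomogeneous m) : aeval y p ∈ W ^ m := by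
  refine pow_le_pow_left' (?_ : Submodule.span k (Set.range y) ≤ W) m (aeval_mem_pow hp)
  rw [Submodule.span_le]; rintro _ ⟨i, rfl⟩; exact hy i

lemma fin_pow (W : Submodule k A) [FiniteDimensional k W] (m : ℕ) : FiniteDimensional k ↥(W ^ m) :=
  Module.Finite.iff_fg.mpr ((Module.Finite.iff_fg.mp ‹_›).pow m)

lemma GInd.lower {s D N : ℕ} {y : Fin s → A} {e : Fin D → A} (h : GInd k y e)
    (W : Submodule k A) [FiniteDimensional k W] (hy : ∀ i, y i ∈ W) (he : ∀ i, e i ∈ W ^ N) (j : ℕ) :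
    D * s.multichoose j ≤ Module.finrank k ↥(W ^ (j + N)) := by
  have := fin_pow W (j + N)
  have hm : ∀ p, Tmap (k := k) y e j p ∈ W ^ (j + N) := by
    intro p
    rw [Tmap_apply]
    refine Submodule.sum_mem _ fun i _ => ?_
    rw [pow_add]
    exact Submodule.mul_mem_mul (aeval_mem_pow' hy (p i).2) (he i)
  have hinj : Function.Injective ((Tmap (k := k) y e j).codRestrict _ hm) := by
    intro a b hab
    exact h.injective j (congrArg Subtype.val hab)
  have := LinearMap.finrank_le_finrank_of_injective hinj
  rw [Module.finrank_pi_fintype] at this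
  simpa [finrank_homog] using this

lemma exists_max {s N : ℕ} {y : Fin s → A}
    (W : Submodule k A) [FiniteDimensional k W] (hy : ∀ i, y i ∈ W) (e0 : A) (h0 : e0 ∈ W ^ N)
    (hi : GInd k y (fun _ : Fin 1 => e0)) :
    ∃ (D : ℕ) (e : Fin D → A), (∀ i, e i ∈ W ^ N) ∧ GInd k y e ∧ (∃ i, e i = e0) ∧
      ∀ g ∈ W ^ N, ∃ j, ∃ Δ : MvPolynomial (Fin s) k, Δ.IsHomogeneous j ∧ Δ ≠ 0 ∧
        aeval y Δ * g ∈ LinearMap.range (Tmap (k := k) y e j) := by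
  let P : ℕ → Prop := fun D => ∃ e : Fin D → A, (∀ i, e i ∈ W ^ N) ∧ GInd k y e ∧ (∃ i, e i = e0)
  have hP1 : P 1 := ⟨_, fun _ => h0, hi, 0, rfl⟩
  have hB : ∀ D, P D → D ≤ Module.finrank k ↥(W ^ N) := by
    rintro D ⟨e, he, hg, -⟩
    have := hg.lower W hy he 0
    rw [zero_add] at this
    simpa using this
  obtain ⟨D, hD, hD'⟩ : ∃ D, P D ∧ ¬ P (D + 1) := by
    by_contra! h
    have : ∀ D, P (D + 1) := fun D => by
      induction D with
      | zero => exact hP1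
      | succ D ih => exact h _ ih
    have := hB _ (this (Module.finrank k ↥(W ^ N)))
    omega
  obtain ⟨e, he, hg, i0, hi0⟩ := hD
  refine ⟨D, e, he, hg, ⟨i0, hi0⟩, fun g hgW => ?_⟩
  have hn : ¬ GInd k y (Fin.cons g e : Fin (D + 1) → A) := fun h =>
    hD' ⟨Fin.cons g e, fun i => by refine Fin.cases ?_ ?_ i <;> simp [hgW, he], h, i0.succ, by simpa using hi0⟩
  unfold GInd at hn
  push Not at hn
  obtain ⟨j, p, hp, hsum, i, hpi⟩ := hn
  rw [Fin.sum_univ_succ] at hsum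
  simp only [Fin.cons_zero, Fin.cons_succ] at hsum
  have hp0 : p 0 ≠ 0 := by
    intro h
    rw [h] at hsum
    simp only [map_zero, zero_mul, zero_add] at hsum
    have := hg j (fun i => p i.succ) (fun i => hp _) hsum
    revert hpi
    refine Fin.cases (fun h' => h' h) (fun i h' => h' (this i)) i
  refine ⟨j, p 0, hp 0, hp0, ?_⟩
  rw [mem_range_Tmap]
  refine ⟨fun i => - p i.succ, fun i => (hp _).neg, ?_⟩
  rw [eq_neg_of_add_eq_zero_left hsum, ← Finset.sum_neg_distrib]
  simp

lemma exists_common {s N : ℕ} {y : Fin s → A}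
    (W : Submodule k A) [FiniteDimensional k W] {D : ℕ} (e : Fin D → A)
    (h : ∀ g ∈ W ^ N, ∃ j, ∃ Δ : MvPolynomial (Fin s) k, Δ.IsHomogeneous j ∧ Δ ≠ 0 ∧
        aeval y Δ * g ∈ LinearMap.range (Tmap (k := k) y e j)) :
    ∃ j, ∃ Δ : MvPolynomial (Fin s) k, Δ.IsHomogeneous j ∧ Δ ≠ 0 ∧
      ∀ g ∈ W ^ N, aeval y Δ * g ∈ LinearMap.range (Tmap (k := k) y e j) := by
  classical
  have := fin_pow W N
  obtain ⟨S, hS⟩ := Module.Finite.iff_fg.mp this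
  have key : ∀ S : Finset A, (∀ g ∈ S, g ∈ W ^ N) → ∃ j, ∃ Δ : MvPolynomial (Fin s) k,
      Δ.IsHomogeneous j ∧ Δ ≠ 0 ∧
      ∀ g ∈ S, aeval y Δ * g ∈ LinearMap.range (Tmap (k := k) y e j) := by
    intro S
    induction S using Finset.induction_on with
    | empty => intro _; exact ⟨0, 1, isHomogeneous_one _ _, one_ne_zero, by simp⟩
    | insert g S _ ih =>
      intro hS
      obtain ⟨j, Δ, h1, h2, h3⟩ := ih fun g hg => hS g (Finset.mem_insert_of_mem hg)
      obtain ⟨j', Δ', h1', h2', h3'⟩ := h g (hS g (Finset.mem_insert_self _ _))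
      refine ⟨j + j', Δ * Δ', h1.mul h1', mul_ne_zero h2 h2', fun x hx => ?_⟩
      rcases Finset.mem_insert.mp hx with rfl | hx
      · rw [map_mul, mul_assoc]
        exact mul_mem_range_Tmap h1 h3'
      · rw [map_mul, mul_comm (aeval y Δ), mul_assoc, add_comm]
        exact mul_mem_range_Tmap h1' (h3 x hx)
  obtain ⟨j, Δ, h1, h2, h3⟩ := key S (fun g hg => by rw [← hS]; exact Submodule.subset_span hg)
  refine ⟨j, Δ, h1, h2, ?_⟩
  have : W ^ N ≤ (LinearMap.range (Tmap (k := k) y e j)).comap (LinearMap.mulLeft k (aeval y Δ)) := by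
    rw [← hS, Submodule.span_le]
    exact h3
  exact fun g hg => this hg

end core

section core
variable {k A : Type*} [Field k] [CommRing A] [Algebra k A]

lemma gind_single [IsDomain A] {s N : ℕ} {y : Fin s → A}
    (hind : ∀ m, ∀ p ∈ homogeneousSubmodule (Fin s) k m, aeval y p = 0 → p = 0)
    (θ : MvPolynomial (Fin s) k) (hθ : θ.IsHomogeneous N) (h0 : θ ≠ 0) :
    GInd k y (fun _ : Fin 1 => aeval y θ) := by
  intro j p hp hsum i
  have h : aeval y (p 0) * aeval y θ = 0 := by simpa using hsum
  rw [← map_mul] at h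
  have := hind (j + N) _ ((hp 0).mul hθ) h
  rw [Subsingleton.elim i 0]
  exact (mul_eq_zero.mp this).resolve_right h0

lemma dg_sum_le {s : ℕ} {i0 : Fin s} {ψ : MvPolynomial (Fin s) k →ₐ[k] MvPolynomial (Fin s) k}
    {ι : Type*} (S : Finset ι) (f : ι → MvPolynomial (Fin s) k) (b : ℕ)
    (h : ∀ i ∈ S, degreeOf i0 (ψ (f i)) ≤ b) : degreeOf i0 (ψ (∑ i ∈ S, f i)) ≤ b := by
  rw [map_sum]
  exact (degreeOf_sum_le _ _ _).trans (Finset.sup_le h)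

lemma dg_le {s : ℕ} {i0 : Fin s} {ψ : MvPolynomial (Fin s) k →ₐ[k] MvPolynomial (Fin s) k}
    (hhom : ∀ m p, p.IsHomogeneous m → (ψ p).IsHomogeneous m) {m : ℕ} {p : MvPolynomial (Fin s) k}
    (hp : p.IsHomogeneous m) : degreeOf i0 (ψ p) ≤ m :=
  (degreeOf_le_totalDegree _ _).trans (hhom m p hp).totalDegree_le

/-- The key nilpotence argument. -/
lemma core_kernel [IsDomain A] {s N M D : ℕ} (hM : 0 < M) {y : Fin s → A}
    (W : Submodule k A) (e : Fin D → A)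
    (he : ∀ i, e i ∈ W ^ N) (hg : GInd k y e)
    (θ Δ : MvPolynomial (Fin s) k) (hθ : θ.IsHomogeneous N) (hΔ : Δ.IsHomogeneous M)
    (hΔ0 : Δ ≠ 0) (hind : ∀ m, ∀ p ∈ homogeneousSubmodule (Fin s) k m, aeval y p = 0 → p = 0)
    (i1 : Fin D) (hi1 : e i1 = aeval y θ)
    (hall : ∀ j, ∀ g ∈ W ^ (N + j), aeval y Δ * g ∈ LinearMap.range (Tmap (k := k) y e (M + j)))
    (i0 : Fin s) (ψ : MvPolynomial (Fin s) k →ₐ[k] MvPolynomial (Fin s) k)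
    (hinj : Function.Injective ψ) (hhom : ∀ m p, p.IsHomogeneous m → (ψ p).IsHomogeneous m)
    (hdΔ : degreeOf i0 (ψ Δ) = M) (hdθ : degreeOf i0 (ψ θ) = N) (hθ0 : θ ≠ 0)
    (m : ℕ) (f : A) (hf : f ∈ W ^ m) (p : Fin D → MvPolynomial (Fin s) k)
    (hp : ∀ i, (p i).IsHomogeneous (M + m))
    (hpf : ∑ i, aeval y (p i) * e i = aeval y Δ * (f * aeval y θ))
    (hlow : ∀ i, degreeOf i0 (ψ (p i)) < M) : f = 0 := by
  have hee : ∀ l i, ∃ g : Fin D → MvPolynomial (Fin s) k, (∀ n, (g n).IsHomogeneous (M + N)) ∧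
      ∑ n, aeval y (g n) * e n = aeval y Δ * (e l * e i) := by
    intro l i
    have := hall N (e l * e i) (by rw [pow_add]; exact Submodule.mul_mem_mul (he l) (he i))
    rwa [mem_range_Tmap] at this
  choose g hgh hgs using hee
  set u := aeval y Δ with hu
  set e0 := aeval y θ with he0
  have hiter : ∀ t, ∃ q : Fin D → MvPolynomial (Fin s) k,
      (∀ n, (q n).IsHomogeneous (t * (m + N + 2 * M))) ∧
      (∀ n, degreeOf i0 (ψ (q n)) ≤ t * (N + 2 * M - 1)) ∧
      ∑ n, aeval y (q n) * e n = (u * (u * (f * e0))) ^ t * e0 := by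
    intro t
    induction t with
    | zero =>
      refine ⟨fun n => if n = i1 then 1 else 0, fun n => ?_, fun n => ?_, ?_⟩
      · beta_reduce
        split_ifs
        · simpa using isHomogeneous_one (Fin s) k
        · exact isHomogeneous_zero _ _ _
      · beta_reduce
        split_ifs <;> simp [degreeOf_one]
      · rw [Finset.sum_eq_single i1 (fun b _ hb => by simp [hb]) (by simp)]
        simp [hi1]
    | succ t ih =>
      obtain ⟨q, hq1, hq2, hq3⟩ := ih
      refine ⟨fun n => ∑ i, ∑ l, q i * p l * g l i n, fun n => ?_, fun n => ?_, ?_⟩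
      · refine IsHomogeneous.sum _ _ _ fun i _ => IsHomogeneous.sum _ _ _ fun l _ => ?_
        have := ((hq1 i).mul (hp l)).mul (hgh l i n)
        convert this using 1
        ring
      · refine dg_sum_le _ _ _ fun i _ => dg_sum_le _ _ _ fun l _ => ?_
        rw [map_mul, map_mul]
        have h1 := degreeOf_mul_le i0 (ψ (q i) * ψ (p l)) (ψ (g l i n))
        have h2 := degreeOf_mul_le i0 (ψ (q i)) (ψ (p l))
        have h3 := hq2 i
        have h4 := hlow l
        have h5 := dg_le (i0 := i0) hhom (hgh l i n)
        have h6 : (t + 1) * (N + 2 * M - 1) = t * (N + 2 * M - 1) + (N + 2 * M - 1) := by ring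
        omega
      · have : (u * (u * (f * e0))) ^ (t + 1) * e0
            = u * (u * (f * e0)) * ((u * (u * (f * e0))) ^ t * e0) := by ring
        rw [this, ← hq3, ← hpf]
        have h7 : u * (∑ l, aeval y (p l) * e l) * ∑ i, aeval y (q i) * e i
            = ∑ i, ∑ l, aeval y (q i) * aeval y (p l) * (u * (e l * e i)) := by
          rw [mul_assoc, Finset.sum_mul_sum, Finset.mul_sum, Finset.sum_comm]
          simp_rw [Finset.mul_sum]
          refine Finset.sum_congr rfl fun i _ => Finset.sum_congr rfl fun l _ => by ring
        rw [h7]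
        simp_rw [← hgs, Finset.mul_sum, map_sum, Finset.sum_mul, map_mul]
        rw [Finset.sum_comm]
        refine Finset.sum_congr rfl fun i _ => ?_
        rw [Finset.sum_comm]
        refine Finset.sum_congr rfl fun l _ => Finset.sum_congr rfl fun n _ => by ring
  obtain ⟨q, hq1, hq2, hq3⟩ := hiter (M + 1)
  have hft : f ^ (M + 1) * e0 ∈ W ^ (N + m * (M + 1)) := by
    rw [add_comm, pow_add, pow_mul, ← hi1]
    exact Submodule.mul_mem_mul (Submodule.pow_mem_pow _ hf _) (he i1)
  obtain ⟨r, hr1, hr2⟩ := mem_range_Tmap.mp (hall _ _ hft)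
  have hrel := hg (M + (M + 1) * (m + N + 2 * M))
    (fun n => Δ * q n - Δ ^ (2 * (M + 1)) * θ ^ (M + 1) * r n)
    (fun n => by
      refine IsHomogeneous.sub (hΔ.mul (hq1 n)) ?_
      have h1 := ((hΔ.pow (2 * (M + 1))).mul (hθ.pow (M + 1))).mul (hr1 n)
      have h2 : M + (M + 1) * (m + N + 2 * M) = M * (2 * (M + 1)) + N * (M + 1) + (M + m * (M + 1)) := by
        ring
      rw [h2]
      exact h1)
    (by
      simp only [map_sub, map_mul, map_pow, sub_mul, Finset.sum_sub_distrib]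
      simp only [mul_assoc, ← Finset.mul_sum]
      rw [hq3, hr2]
      ring)
  have hr0 : ∀ n, r n = 0 := by
    intro n
    by_contra hrn
    have h1 : Δ * q n = Δ ^ (2 * (M + 1)) * θ ^ (M + 1) * r n := sub_eq_zero.mp (hrel n)
    have hψ : ∀ z, z ≠ 0 → ψ z ≠ 0 := fun z hz => by
      rwa [Ne, map_eq_zero_iff ψ hinj]
    have h2 : degreeOf i0 (ψ (Δ * q n)) ≤ M + (M + 1) * (N + 2 * M - 1) := by
      rw [map_mul]
      exact (degreeOf_mul_le _ _ _).trans (add_le_add hdΔ.le (hq2 n))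
    rw [h1, map_mul, map_mul, map_pow, map_pow,
      degreeOf_mul_eq (mul_ne_zero (pow_ne_zero _ (hψ _ hΔ0)) (pow_ne_zero _ (hψ _ hθ0))) (hψ _ hrn),
      degreeOf_mul_eq (pow_ne_zero _ (hψ _ hΔ0)) (pow_ne_zero _ (hψ _ hθ0)),
      degreeOf_pow_eq _ _ _ (hψ _ hΔ0), degreeOf_pow_eq _ _ _ (hψ _ hθ0), hdΔ, hdθ] at h2
    obtain ⟨K, hK⟩ : ∃ K, N + 2 * M = K + 1 := ⟨N + 2 * M - 1, by omega⟩
    have h3 : 2 * (M + 1) * M + (M + 1) * N = (M + 1) * (K + 1) := by rw [← hK]; ring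
    have h4 : N + 2 * M - 1 = K := by omega
    rw [h3, h4] at h2
    have : (M + 1) * (K + 1) = (M + 1) * K + (M + 1) := by ring
    omega
  have h5 : u * (f ^ (M + 1) * e0) = 0 := by
    rw [← hr2]; simp [hr0]
  have hu0 : u ≠ 0 := fun h => hΔ0 (hind M Δ hΔ h)
  have he00 : e0 ≠ 0 := fun h => hθ0 (hind N θ hθ h)
  have h6 := (mul_eq_zero.mp ((mul_eq_zero.mp h5).resolve_left hu0)).resolve_right he00
  exact pow_eq_zero_iff (by omega) |>.mp h6

theorem core_bounds [Infinite k] [IsDomain A] (W : Submodule k A) [FiniteDimensional k W]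
    (hW : W ≠ ⊥) : ∃ s D c : ℕ, 0 < s ∧ 0 < D ∧ ∀ m,
      Module.finrank k ↥(W ^ m) ≤ D * s.multichoose m ∧
      D * s.multichoose m ≤ Module.finrank k ↥(W ^ (m + c)) ∧
      s.multichoose m ≤ Module.finrank k ↥(W ^ m) := by
  obtain ⟨s, y, hy, hind, N, hN⟩ := exists_noether W
  have hs : 0 < s := by
    rcases Nat.eq_zero_or_pos s with rfl | h
    · exfalso
      obtain ⟨w, hw, hw0⟩ := Submodule.exists_mem_ne_zero_of_ne_bot hW
      have := hN (Submodule.pow_mem_pow W hw (N + 1))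
      simp at this
      exact hw0 this
    · exact h
  obtain ⟨N, hN1, hN⟩ : ∃ N, 0 < N ∧ W ^ (N + 1) ≤ Submodule.span k (Set.range y) * W ^ N := by
    refine ⟨N + 1, by omega, ?_⟩
    calc W ^ (N + 1 + 1) = W ^ (N + 1) * W := pow_succ _ _
      _ ≤ Submodule.span k (Set.range y) * W ^ N * W := by gcongr
      _ = _ := by ring
  set θ : MvPolynomial (Fin s) k := X ⟨0, hs⟩ ^ N
  have hθ : θ.IsHomogeneous N := isHomogeneous_X_pow _ _
  have hθ0 : θ ≠ 0 := pow_ne_zero _ (X_ne_zero _)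
  obtain ⟨D, e, he, hg, ⟨i1, hi1⟩, hmax⟩ := exists_max W hy (aeval y θ) (aeval_mem_pow' hy hθ)
    (gind_single hind θ hθ hθ0)
  obtain ⟨M1, Δ1, hΔ1, hΔ10, hΔ1e⟩ := exists_common W e hmax
  set Δ := θ * Δ1
  set M := N + M1
  have hΔ : Δ.IsHomogeneous M := hθ.mul hΔ1
  have hΔ0 : Δ ≠ 0 := mul_ne_zero hθ0 hΔ10
  have hΔe : ∀ g ∈ W ^ N, aeval y Δ * g ∈ LinearMap.range (Tmap (k := k) y e M) := by
    intro g hgW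
    simp only [Δ, map_mul, mul_assoc]
    exact mul_mem_range_Tmap hθ (hΔ1e g hgW)
  have hall : ∀ j, ∀ g ∈ W ^ (N + j), aeval y Δ * g ∈ LinearMap.range (Tmap (k := k) y e (M + j)) := by
    intro j g hgW
    have hgW' := reduction_pow _ W N hN j hgW
    clear hgW
    induction hgW' using Submodule.mul_induction_on' with
    | mem_mul_mem a ha b hb =>
      obtain ⟨p, hp, rfl⟩ := exists_aeval_of_mem_pow ha
      rw [mul_left_comm, add_comm]
      exact mul_mem_range_Tmap hp (hΔe b hb)
    | add a _ b _ ha hb => rw [mul_add]; exact Submodule.add_mem _ ha hb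
  obtain ⟨i0, ψ, hinj, hhom, hdΔ'⟩ := exists_dg Δ hΔ (by omega) hΔ0
  have hdΔ : degreeOf i0 (ψ Δ) = M := le_antisymm (dg_le hhom hΔ) hdΔ'
  have hψ : ∀ z, z ≠ 0 → ψ z ≠ 0 := fun z hz => by rwa [Ne, map_eq_zero_iff ψ hinj]
  have hdθ : degreeOf i0 (ψ θ) = N := by
    have h1 := dg_le (i0 := i0) hhom hθ
    have h2 := dg_le (i0 := i0) hhom hΔ1
    have h3 := hdΔ
    simp only [Δ, map_mul] at h3
    rw [degreeOf_mul_eq (hψ _ hθ0) (hψ _ hΔ10)] at h3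
    omega
  refine ⟨s, D, N, hs, ?_, fun m => ⟨?_, hg.lower W hy he m, ?_⟩⟩
  · have := i1.2; omega
  · -- upper bound
    let B := Finset.finsuppAntidiag (Finset.univ : Finset (Fin s)) m
    let T := LinearEquiv.ofInjective _ (hg.injective (M + m))
    have hmem : ∀ f : ↥(W ^ m), (LinearMap.mulLeft k (aeval y Δ) ∘ₗ LinearMap.mulRight k (aeval y θ) ∘ₗ
        (W ^ m).subtype) f ∈ LinearMap.range (Tmap (k := k) y e (M + m)) := by
      intro f
      refine hall m _ ?_
      rw [add_comm, pow_add]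
      exact Submodule.mul_mem_mul f.2 (aeval_mem_pow' hy hθ)
    let G : ↥(W ^ m) →ₗ[k] (Fin D → homogeneousSubmodule (Fin s) k (M + m)) :=
      T.symm.toLinearMap ∘ₗ LinearMap.codRestrict _ _ hmem
    have hG : ∀ f : ↥(W ^ m), ∑ i, aeval y (G f i : MvPolynomial (Fin s) k) * e i
        = aeval y Δ * ((f : A) * aeval y θ) := by
      intro f
      rw [← Tmap_apply]
      have : T (G f) = LinearMap.codRestrict _ _ hmem f := by simp [G]
      have := congrArg Subtype.val this
      simpa [T] using this
    let Φ : ↥(W ^ m) →ₗ[k] (Fin D → (B → k)) := LinearMap.pi fun i => LinearMap.pi fun β =>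
      lcoeff k (β.1 + Finsupp.single i0 M) ∘ₗ ψ.toLinearMap ∘ₗ
        (homogeneousSubmodule (Fin s) k (M + m)).subtype ∘ₗ LinearMap.proj i ∘ₗ G
    have hΦ : Function.Injective Φ := by
      rw [← LinearMap.ker_eq_bot, LinearMap.ker_eq_bot']
      intro f hf
      refine Subtype.ext ?_
      refine core_kernel (by omega) W e he hg θ Δ hθ hΔ hΔ0 hind i1 hi1 hall i0 ψ hinj hhom hdΔ hdθ hθ0
        m f f.2 (fun i => G f i) (fun i => (G f i).2) (hG f) ?_
      intro i
      rw [degreeOf_lt_iff (by omega)]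
      intro α hα
      by_contra hlt
      push Not at hlt
      have hle : Finsupp.single i0 M ≤ α := by simpa using hlt
      have hdeg : α.degree = M + m := by
        rw [(hhom _ _ (G f i).2).degree_eq_sum_deg_support hα]; rfl
      have hβ : α - Finsupp.single i0 M ∈ B := by
        rw [Finset.mem_finsuppAntidiag]
        refine ⟨?_, Finset.subset_univ _⟩
        have h1 := congrArg Finsupp.degree (tsub_add_cancel_of_le hle)
        rw [map_add, hdeg, Finsupp.degree_single, Finsupp.degree_eq_sum] at h1
        have h2 : (Finset.univ.sum ⇑(α - Finsupp.single i0 M)) = ∑ i, (α - Finsupp.single i0 M) i := rfl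
        omega
      have := congrFun (congrFun hf i) ⟨_, hβ⟩
      simp only [Φ, LinearMap.pi_apply, LinearMap.comp_apply, lcoeff_apply, tsub_add_cancel_of_le hle] at this
      exact (mem_support_iff.mp hα) this
    have := LinearMap.finrank_le_finrank_of_injective hΦ
    rw [Module.finrank_pi_fintype] at this
    simpa [B, Finset.card_finsuppAntidiag_nat_eq_multichoose] using this
  · have h1 : GInd k y (fun _ : Fin 1 => aeval y (1 : MvPolynomial (Fin s) k)) :=
      gind_single hind 1 (isHomogeneous_one _ _) one_ne_zero
    simpa using h1.lower W hy (N := 0) (by simp) m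

end core

section basechange
open scoped Pointwise
variable {k A : Type*} [Field k] [CommRing A] [Algebra k A]

/-- Coefficientwise extension. -/
noncomputable def hahnHom (k A : Type*) [Field k] [CommRing A] [Algebra k A] :
    HahnSeries ℤ k →+* HahnSeries ℤ A where
  toFun x := x.map (algebraMap k A)
  map_zero' := HahnSeries.map_zero ((algebraMap k A : k →+* A) : ZeroHom k A)
  map_one' := HahnSeries.map_one ((algebraMap k A : k →+* A).toMonoidWithZeroHom)
  map_add' x y := HahnSeries.map_add ((algebraMap k A : k →+* A) : k →+ A)
  map_mul' x y := HahnSeries.map_mul ((algebraMap k A : k →+* A) : k →ₙ+* A)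

/-- The algebra structure. -/
noncomputable abbrev hahnAlg (k A : Type*) [Field k] [CommRing A] [Algebra k A] :
    Algebra (HahnSeries ℤ k) (HahnSeries ℤ A) := (hahnHom k A).toAlgebra

attribute [local instance] hahnAlg

lemma hahn_smul_C_coeff (c : HahnSeries ℤ k) (a : A) (j : ℤ) :
    (c • (HahnSeries.C a : HahnSeries ℤ A)).coeff j = c.coeff j • a := by
  rw [Algebra.smul_def]
  change (hahnHom k A c * HahnSeries.single 0 a).coeff j = _
  rw [HahnSeries.coeff_mul_single_zero, Algebra.smul_def]
  rfl

lemma hahn_C_smul (c : k) (a : A) :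
    (HahnSeries.C (c • a) : HahnSeries ℤ A) = (HahnSeries.C c : HahnSeries ℤ k) • HahnSeries.C a := by
  ext j
  rw [hahn_smul_C_coeff]
  simp only [HahnSeries.C_apply, HahnSeries.coeff_single]
  split_ifs <;> simp

lemma hahn_indep {ι : Type*} [Fintype ι] {b : ι → A} (hb : LinearIndependent k b) :
    LinearIndependent (HahnSeries ℤ k) (fun i => (HahnSeries.C (b i) : HahnSeries ℤ A)) := by
  rw [Fintype.linearIndependent_iff] at *
  intro g hg i
  ext j
  refine hb (fun i => (g i).coeff j) ?_ i
  have := congrArg (fun x => x.coeff j) hg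
  simpa only [HahnSeries.coeff_sum, hahn_smul_C_coeff, HahnSeries.coeff_zero] using this

/-- Base change of a subspace. -/
noncomputable def bc (V : Submodule k A) : Submodule (HahnSeries ℤ k) (HahnSeries ℤ A) :=
  Submodule.span _ ((HahnSeries.C : A →+* HahnSeries ℤ A) '' (V : Set A))

lemma bc_span (S : Set A) : bc (Submodule.span k S) = Submodule.span (HahnSeries ℤ k)
    ((HahnSeries.C : A →+* HahnSeries ℤ A) '' S) := by
  apply le_antisymm
  · rw [bc, Submodule.span_le]
    rintro _ ⟨a, ha, rfl⟩
    induction ha using Submodule.span_induction with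
    | mem x hx => exact Submodule.subset_span ⟨x, hx, rfl⟩
    | zero => simp
    | add x y _ _ hx hy => rw [map_add]; exact Submodule.add_mem _ hx hy
    | smul c x _ hx =>
      rw [hahn_C_smul]
      exact Submodule.smul_mem _ _ hx
  · exact Submodule.span_mono (Set.image_mono Submodule.subset_span)

lemma bc_pow (W : Submodule k A) (m : ℕ) : bc (W ^ m) = bc W ^ m := by
  have h : W ^ m = Submodule.span k ((W : Set A) ^ m) := by
    rw [← Submodule.span_pow, Submodule.span_eq]
  rw [h, bc_span, Set.image_pow, bc, Submodule.span_pow]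

lemma finrank_bc (V : Submodule k A) [FiniteDimensional k V] :
    FiniteDimensional (HahnSeries ℤ k) (bc V) ∧
    Module.finrank (HahnSeries ℤ k) (bc V) = Module.finrank k V := by
  let b := Module.finBasis k V
  have hli : LinearIndependent k (fun i => (b i : A)) :=
    b.linearIndependent.map' V.subtype (Submodule.ker_subtype _)
  have hsp : V = Submodule.span k (Set.range (fun i => (b i : A))) := by
    have := b.span_eq
    have h2 := congrArg (Submodule.map V.subtype) this
    rw [Submodule.map_span, Submodule.map_top, Submodule.range_subtype, ← Set.range_comp] at h2
    exact h2.symm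
  have hV : bc V = Submodule.span (HahnSeries ℤ k)
      (Set.range (fun i => (HahnSeries.C (b i : A) : HahnSeries ℤ A))) := by
    conv_lhs => rw [hsp]
    rw [bc_span, ← Set.range_comp]
    rfl
  rw [hV]
  refine ⟨FiniteDimensional.span_of_finite _ (Set.finite_range _), ?_⟩
  rw [finrank_span_eq_card (hahn_indep hli)]
  simp

theorem core_bounds' [IsDomain A] (W : Submodule k A) [FiniteDimensional k W]
    (hW : W ≠ ⊥) : ∃ s D c : ℕ, 0 < s ∧ 0 < D ∧ ∀ m,
      Module.finrank k ↥(W ^ m) ≤ D * s.multichoose m ∧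
      D * s.multichoose m ≤ Module.finrank k ↥(W ^ (m + c)) ∧
      s.multichoose m ≤ Module.finrank k ↥(W ^ m) := by
  have : Infinite (HahnSeries ℤ k) := by
    refine Infinite.of_injective (fun i : ℤ => HahnSeries.single i (1 : k)) ?_
    intro i j h
    by_contra hij
    have := congrArg (fun x => x.coeff i) h
    simp [HahnSeries.coeff_single_of_ne hij] at this
  have := (finrank_bc W).1
  have hW' : bc W ≠ ⊥ := by
    obtain ⟨w, hw, hw0⟩ := Submodule.exists_mem_ne_zero_of_ne_bot hW
    intro h
    have h1 : (HahnSeries.C w : HahnSeries ℤ A) ∈ bc W := Submodule.subset_span ⟨w, hw, rfl⟩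
    rw [h, Submodule.mem_bot] at h1
    exact hw0 (HahnSeries.C_injective (h1.trans (map_zero _).symm))
  obtain ⟨s, D, c, hs, hD, h⟩ := core_bounds (bc W) hW'
  have key : ∀ m, Module.finrank (HahnSeries ℤ k) ↥(bc W ^ m) = Module.finrank k ↥(W ^ m) := by
    intro m
    have := fin_pow W m
    rw [← bc_pow, (finrank_bc _).2]
  simp only [key] at h
  exact ⟨s, D, c, hs, hD, h⟩

end basechange

section link
variable {k : Type*} [Field k] {n : ℕ}

/-- The degree one part of the quotient. -/
noncomputable def linPart (Q : Ideal (MvPolynomial (Fin (n+1)) k)) :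
    Submodule k (MvPolynomial (Fin (n+1)) k ⧸ Q) :=
  Submodule.span k (Set.range fun i => Ideal.Quotient.mk Q (X i))

instance (Q : Ideal (MvPolynomial (Fin (n+1)) k)) : FiniteDimensional k (linPart Q) :=
  FiniteDimensional.span_of_finite _ (Set.finite_range _)

lemma hilbF_eq (Q : Ideal (MvPolynomial (Fin (n+1)) k)) (m : ℕ) :
    hilbF k Q m = Module.finrank k ↥(linPart Q ^ m) := by
  have h : Ideal.Quotient.mkₐ k Q = aeval fun i => Ideal.Quotient.mk Q (X i) := by
    ext i
    simp
  rw [linPart, ← map_homog_eq_pow, hilbF, h]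

lemma prime_bounds (Q : Ideal (MvPolynomial (Fin (n+1)) k)) [Q.IsPrime] (hW : linPart Q ≠ ⊥) :
    ∃ s D c : ℕ, 0 < s ∧ 0 < D ∧ ∀ m,
      hilbF k Q m ≤ D * s.multichoose m ∧ D * s.multichoose m ≤ hilbF k Q (m + c) ∧
      s.multichoose m ≤ hilbF k Q m := by
  obtain ⟨s, D, c, hs, hD, h⟩ := core_bounds' (linPart Q) hW
  simp only [← hilbF_eq] at h
  exact ⟨s, D, c, hs, hD, h⟩

lemma krull_le {A : Type*} [CommRing A] [Algebra k A] {t : ℕ} (g : MvPolynomial (Fin t) k →ₐ[k] A)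
    (hg : g.IsIntegral) : ringKrullDim A ≤ t := by
  have h0 : ringKrullDim (MvPolynomial (Fin t) k) = t := by
    rw [MvPolynomial.ringKrullDim_of_isNoetherianRing]
    simp
  rw [← h0]
  let := (g : MvPolynomial (Fin t) k →+* A).toAlgebra
  have : Algebra.IsIntegral (MvPolynomial (Fin t) k) A := ⟨hg⟩
  refine Order.krullDim_le_of_strictMono (PrimeSpectrum.comap (algebraMap (MvPolynomial (Fin t) k) A)) ?_
  intro p q hpq
  exact Ideal.IsIntegral.comap_lt_comap (I := p.asIdeal) (J := q.asIdeal) hpq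

lemma krull_lower (Q : Ideal (MvPolynomial (Fin (n+1)) k)) [Q.IsPrime] (d : ℕ)
    (hd : (d : WithBot ℕ∞) ≤ ringKrullDim (MvPolynomial (Fin (n+1)) k ⧸ Q)) (m : ℕ) :
    d.multichoose m ≤ hilbF k Q m := by
  obtain ⟨t, g, hinj, hgint⟩ := exists_integral_inj_algHom_of_fg k (MvPolynomial (Fin (n+1)) k ⧸ Q)
  have hdt : d ≤ t := by
    have := hd.trans (krull_le g hgint)
    exact_mod_cast this
  let S : Set (MvPolynomial (Fin (n+1)) k ⧸ Q) := Set.range fun i => Ideal.Quotient.mk Q (X i)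
  have hS : Algebra.adjoin k S = ⊤ := by
    have h1 : S = (Ideal.Quotient.mkₐ k Q) '' (Set.range X) := by
      rw [← Set.range_comp]; rfl
    rw [h1, ← AlgHom.map_adjoin, MvPolynomial.adjoin_range_X, Algebra.map_top]
    exact (AlgHom.range_eq_top _).mpr (Ideal.Quotient.mkₐ_surjective k Q)
  have : Algebra.IsAlgebraic (Algebra.adjoin k S) (MvPolynomial (Fin (n+1)) k ⧸ Q) := by
    refine ⟨fun a => ?_⟩
    exact isAlgebraic_algebraMap (⟨a, by rw [hS]; trivial⟩ : Algebra.adjoin k S)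
  obtain ⟨B, hBS, hB⟩ := exists_isTranscendenceBasis_subset (R := k) S
  have hgi : AlgebraicIndependent k (fun i : Fin t => g (X i)) := by
    rw [AlgebraicIndependent, show (aeval fun i : Fin t => g (X i)) = g from by ext i; simp]
    exact hinj
  have h1 := hgi.lift_cardinalMk_le_trdeg
  rw [← hB.cardinalMk_eq_trdeg] at h1
  have hBf : B.Finite := (Set.finite_range _).subset hBS
  have : Fintype B := hBf.fintype
  have h2 : t ≤ Fintype.card B := by simpa using h1
  obtain ⟨φ⟩ : Nonempty (Fin d ↪ B) := by
    rw [Function.Embedding.nonempty_iff_card_le]; simpa using hdt.trans h2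
  have hy : AlgebraicIndependent k (fun i => (φ i : MvPolynomial (Fin (n+1)) k ⧸ Q)) :=
    hB.1.comp φ φ.injective
  rw [hilbF_eq]
  have := fin_pow (linPart Q) m
  have hmem : ∀ p : homogeneousSubmodule (Fin d) k m,
      ((aeval fun i => (φ i : MvPolynomial (Fin (n+1)) k ⧸ Q)).toLinearMap ∘ₗ
        (homogeneousSubmodule (Fin d) k m).subtype) p ∈ linPart Q ^ m := fun p =>
    aeval_mem_pow' (fun i => Submodule.subset_span (hBS (φ i).2)) p.2
  have hinj' : Function.Injective (LinearMap.codRestrict _ _ hmem) := by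
    intro p q hpq
    have := congrArg Subtype.val hpq
    exact Subtype.ext (hy this)
  have := LinearMap.finrank_le_finrank_of_injective hinj'
  rwa [finrank_homog] at this

end link

section asym
open Filter

lemma lc_nonneg (P : Polynomial ℚ) (h : ∀ᶠ m : ℕ in atTop, 0 ≤ P.eval (m : ℚ)) :
    0 ≤ P.leadingCoeff := by
  by_contra! hlt
  by_cases hd : 0 < P.degree
  · have h1 := (Polynomial.tendsto_atBot_of_leadingCoeff_nonpos P hd hlt.le).comp
      (tendsto_natCast_atTop_atTop (R := ℚ))
    obtain ⟨m, hm1, hm2⟩ := (h.and (h1.eventually (eventually_lt_atBot (0 : ℚ)))).exists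
    exact absurd hm1 (not_le.mpr hm2)
  · have h2 := Polynomial.eq_C_of_degree_le_zero (not_lt.mp hd)
    obtain ⟨m, hm⟩ := h.exists
    rw [h2] at hm hlt
    simp only [Polynomial.eval_C, Polynomial.leadingCoeff_C] at hm hlt
    linarith

lemma poly_compare {p q : Polynomial ℚ} (h0 : ∀ᶠ m : ℕ in atTop, 0 ≤ p.eval (m : ℚ))
    (h : ∀ᶠ m : ℕ in atTop, p.eval (m : ℚ) ≤ q.eval (m : ℚ)) :
    p.natDegree ≤ q.natDegree ∧ (p.natDegree = q.natDegree → p.leadingCoeff ≤ q.leadingCoeff) := by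
  have hp := lc_nonneg p h0
  have hqp := lc_nonneg (q - p) (h.mono fun m hm => by simpa using hm)
  constructor
  · by_contra! hlt
    have hdeg : q.degree < p.degree := Polynomial.degree_lt_degree hlt
    rw [Polynomial.leadingCoeff_sub_of_degree_lt' hdeg] at hqp
    have : p.leadingCoeff = 0 := by linarith
    rw [Polynomial.leadingCoeff_eq_zero] at this
    rw [this] at hlt
    simp at hlt
  · intro heq
    by_contra! hlt
    have hc : (q - p).coeff p.natDegree = q.leadingCoeff - p.leadingCoeff := by
      rw [Polynomial.coeff_sub, Polynomial.leadingCoeff, Polynomial.leadingCoeff, heq]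
    have h1 : (q - p).natDegree = p.natDegree := by
      refine Polynomial.natDegree_eq_of_le_of_coeff_ne_zero ?_ ?_
      · exact (Polynomial.natDegree_sub_le _ _).trans (by simp [heq])
      · rw [hc]; linarith
    rw [Polynomial.leadingCoeff, h1, hc] at hqp
    linarith

/-- The binomial polynomial `C(X + s, s)`. -/
noncomputable def binP (s : ℕ) : Polynomial ℚ :=
  Polynomial.C ((s.factorial : ℚ)⁻¹) * (ascPochhammer ℚ s).comp (Polynomial.X + Polynomial.C 1)

lemma binP_natDegree (s : ℕ) : (binP s).natDegree = s := by
  rw [binP, Polynomial.natDegree_C_mul (by positivity), Polynomial.natDegree_comp,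
    ascPochhammer_natDegree, Polynomial.natDegree_X_add_C, mul_one]

lemma binP_lc (s : ℕ) : (binP s).leadingCoeff = (s.factorial : ℚ)⁻¹ := by
  rw [binP, Polynomial.leadingCoeff_mul, Polynomial.leadingCoeff_C,
    Polynomial.leadingCoeff_comp (by rw [Polynomial.natDegree_X_add_C]; exact one_ne_zero),
    (monic_ascPochhammer ℚ s).leadingCoeff, Polynomial.leadingCoeff_X_add_C]
  simp

lemma mc_eq (s m : ℕ) : (s + 1).multichoose m = (m + s).choose s := by
  rw [Nat.multichoose_eq, ← Nat.choose_symm_add]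
  congr 1; omega

lemma binP_eval (s m : ℕ) : (binP s).eval (m : ℚ) = (s + 1).multichoose m := by
  rw [mc_eq, binP]
  simp only [Polynomial.eval_mul, Polynomial.eval_C, Polynomial.eval_comp, Polynomial.eval_add,
    Polynomial.eval_X]
  have : ((m : ℚ) + 1) = ((m + 1 : ℕ) : ℚ) := by push_cast; rfl
  rw [this, ← ascPochhammer_eval_cast, ascPochhammer_nat_eq_ascFactorial,
    Nat.ascFactorial_eq_factorial_mul_choose]
  push_cast
  rw [← mul_assoc, inv_mul_cancel₀ (by positivity), one_mul]

lemma mc_mono {s m m' : ℕ} (hs : 0 < s) (h : m ≤ m') : s.multichoose m ≤ s.multichoose m' := by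
  obtain ⟨s, rfl⟩ : ∃ t, s = t + 1 := ⟨s - 1, by omega⟩
  rw [mc_eq, mc_eq]
  exact Nat.choose_le_choose _ (by omega)

lemma mc_deg_le {s t D c : ℕ} (hs : 0 < s) (ht : 0 < t)
    (h : ∀ m, s.multichoose m ≤ D * t.multichoose (m + c)) : s ≤ t := by
  obtain ⟨s, rfl⟩ : ∃ t, s = t + 1 := ⟨s - 1, by omega⟩
  obtain ⟨t, rfl⟩ : ∃ s, t = s + 1 := ⟨t - 1, by omega⟩
  have := (poly_compare (p := binP s) (q := Polynomial.C (D : ℚ) * (binP t).comp (Polynomial.X + Polynomial.C (c : ℚ)))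
    (Eventually.of_forall fun m => by rw [binP_eval]; positivity)
    (Eventually.of_forall fun m => by
      have h1 := h m
      simp only [Polynomial.eval_mul, Polynomial.eval_C, Polynomial.eval_comp, Polynomial.eval_add,
        Polynomial.eval_X]
      have : ((m : ℚ) + c) = ((m + c : ℕ) : ℚ) := by push_cast; rfl
      rw [this, binP_eval, binP_eval]
      exact_mod_cast h1)).1
  rw [binP_natDegree] at this
  have h2 := Polynomial.natDegree_C_mul_le (D : ℚ) ((binP t).comp (Polynomial.X + Polynomial.C (c : ℚ)))
  rw [Polynomial.natDegree_comp, Polynomial.natDegree_X_add_C, binP_natDegree] at h2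
  omega

/-- Upper bound on the degree. -/
lemma poly_upper {h : ℕ → ℕ} {p : Polynomial ℚ} (hp : ∀ᶠ m : ℕ in atTop, (h m : ℚ) = p.eval (m : ℚ))
    {s D : ℕ} (hb : ∀ m, h m ≤ D * (s + 1).multichoose m) : p.natDegree ≤ s := by
  have := (poly_compare (p := p) (q := Polynomial.C (D : ℚ) * binP s)
    (hp.mono fun m hm => by rw [← hm]; positivity)
    (hp.mono fun m hm => by
      rw [← hm, Polynomial.eval_mul, binP_eval, Polynomial.eval_C]
      exact_mod_cast hb m)).1
  have h2 := Polynomial.natDegree_C_mul_le (D : ℚ) (binP s)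
  rw [binP_natDegree] at h2
  omega

lemma poly_lower {h : ℕ → ℕ} {p : Polynomial ℚ} (hp : ∀ᶠ m : ℕ in atTop, (h m : ℚ) = p.eval (m : ℚ))
    {s D c : ℕ} (hD : 0 < D) (hb : ∀ m, D * (s + 1).multichoose m ≤ h (m + c)) : s ≤ p.natDegree ∧
      (s = p.natDegree → (D : ℚ) ≤ s.factorial * p.leadingCoeff) := by
  have hp' : ∀ᶠ m : ℕ in atTop, (h (m + c) : ℚ) = p.eval ((m + c : ℕ) : ℚ) :=
    (tendsto_add_atTop_nat c).eventually hp
  have key := poly_compare (p := Polynomial.C (D : ℚ) * binP s) (q := p.comp (Polynomial.X + Polynomial.C (c : ℚ)))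
    (Eventually.of_forall fun m => by
      rw [Polynomial.eval_mul, binP_eval, Polynomial.eval_C]; positivity)
    (hp'.mono fun m hm => by
      rw [Polynomial.eval_mul, binP_eval, Polynomial.eval_C]
      simp only [Polynomial.eval_C, Polynomial.eval_comp, Polynomial.eval_add, Polynomial.eval_X]
      have : ((m : ℚ) + c) = ((m + c : ℕ) : ℚ) := by push_cast; rfl
      rw [this, ← hm]
      exact_mod_cast hb m)
  rw [Polynomial.natDegree_C_mul (by positivity), binP_natDegree, Polynomial.natDegree_comp,
    Polynomial.natDegree_X_add_C, mul_one, Polynomial.leadingCoeff_mul, Polynomial.leadingCoeff_C,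
    binP_lc, Polynomial.leadingCoeff_comp (by rw [Polynomial.natDegree_X_add_C]; exact one_ne_zero)] at key
  refine ⟨key.1, fun hs => ?_⟩
  have h3 := key.2 hs
  simp only [Polynomial.leadingCoeff_X_add_C, one_pow, mul_one] at h3
  rw [← div_eq_mul_inv, div_le_iff₀ (by positivity)] at h3
  linarith

lemma poly_zero {h : ℕ → ℕ} {p : Polynomial ℚ} (hp : ∀ᶠ m : ℕ in atTop, (h m : ℚ) = p.eval (m : ℚ))
    (h0 : ∀ᶠ m in atTop, h m = 0) : p = 0 := by
  have h1 := lc_nonneg p (hp.mono fun m hm => by rw [← hm]; positivity)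
  have h2 := lc_nonneg (-p) ((hp.and h0).mono fun m hm => by
    rw [Polynomial.eval_neg, ← hm.1, hm.2]; simp)
  rw [Polynomial.leadingCoeff_neg] at h2
  exact Polynomial.leadingCoeff_eq_zero.mp (by linarith)

lemma hilbP_spec {k : Type*} [Field k] {n : ℕ} {I : Ideal (MvPolynomial (Fin (n+1)) k)}
    (h : hilbP k I ≠ 0) : ∀ᶠ m : ℕ in atTop, (hilbF k I m : ℚ) = (hilbP k I).eval (m : ℚ) := by
  unfold hilbP at *
  split_ifs at h ⊢ with h1
  · exact h1.choose_spec
  · exact absurd rfl h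

lemma finrank_bot_pow {k A : Type*} [Field k] [CommRing A] [Algebra k A] {W : Submodule k A}
    (h : W = ⊥) (m : ℕ) : Module.finrank k ↥(W ^ (m + 1)) = 0 := by
  rw [h, pow_succ, Submodule.mul_bot]
  simp

lemma prime_lower {k : Type*} [Field k] {n e : ℕ} (P : Ideal (MvPolynomial (Fin (n+1)) k)) [P.IsPrime]
    (h : hilbP k P ≠ 0) (he : idealDim k P = e) (m : ℕ) : (m + e).choose e ≤ hilbF k P m := by
  have hW : linPart P ≠ ⊥ := by
    intro hW
    refine h (poly_zero (hilbP_spec h) ?_)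
    filter_upwards [eventually_ge_atTop 1] with m hm
    obtain ⟨m, rfl⟩ : ∃ t, m = t + 1 := ⟨m - 1, by omega⟩
    rw [hilbF_eq]
    exact finrank_bot_pow hW m
  obtain ⟨s, D, c, hs, hD, hb⟩ := prime_bounds P hW
  obtain ⟨s, rfl⟩ : ∃ t, s = t + 1 := ⟨s - 1, by omega⟩
  have h1 := poly_upper (hilbP_spec h) (fun m => (hb m).1)
  have h2 := (poly_lower (hilbP_spec h) hD (fun m => (hb m).2.1)).1
  have : s = e := by rw [← he]; exact le_antisymm h2 h1
  subst this
  rw [← mc_eq]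
  exact (hb m).2.2

end asym

section decomp
variable {k : Type*} [Field k] {n : ℕ}

lemma finrank_range_le {V A B : Type*} [AddCommGroup V] [Module k V] [FiniteDimensional k V]
    [AddCommGroup A] [Module k A] [AddCommGroup B] [Module k B] (f : V →ₗ[k] A) (g : V →ₗ[k] B)
    (h : LinearMap.ker f ≤ LinearMap.ker g) :
    Module.finrank k (LinearMap.range g) ≤ Module.finrank k (LinearMap.range f) := by
  have h1 := LinearMap.finrank_range_add_finrank_ker f
  have h2 := LinearMap.finrank_range_add_finrank_ker g
  have h3 := Submodule.finrank_mono h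
  omega

/-- Restriction of the quotient map to a graded piece. -/
noncomputable def qmap (I : Ideal (MvPolynomial (Fin (n+1)) k)) (m : ℕ) :
    homogeneousSubmodule (Fin (n+1)) k m →ₗ[k] MvPolynomial (Fin (n+1)) k ⧸ I :=
  (Ideal.Quotient.mkₐ k I).toLinearMap ∘ₗ (homogeneousSubmodule (Fin (n+1)) k m).subtype

lemma qmap_eq_zero {I : Ideal (MvPolynomial (Fin (n+1)) k)} {m : ℕ}
    {p : homogeneousSubmodule (Fin (n+1)) k m} : qmap I m p = 0 ↔ (p : MvPolynomial (Fin (n+1)) k) ∈ I :=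
  Ideal.Quotient.eq_zero_iff_mem

lemma hilbF_eq_range (I : Ideal (MvPolynomial (Fin (n+1)) k)) (m : ℕ) :
    hilbF k I m = Module.finrank k (LinearMap.range (qmap I m)) := by
  rw [hilbF, qmap, LinearMap.range_comp, Submodule.range_subtype]

lemma hilbF_le_of (I P : Ideal (MvPolynomial (Fin (n+1)) k)) (m : ℕ)
    (h : ∀ f ∈ I, f.IsHomogeneous m → f ∈ P) : hilbF k P m ≤ hilbF k I m := by
  rw [hilbF_eq_range, hilbF_eq_range]
  refine finrank_range_le _ _ fun p hp => ?_
  rw [LinearMap.mem_ker, qmap_eq_zero] at *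
  exact h _ hp p.2

variable {ι : Type*} [Fintype ι]

lemma hilbF_le_sum (I : Ideal (MvPolynomial (Fin (n+1)) k)) (Q : ι → Ideal (MvPolynomial (Fin (n+1)) k))
    (h : ∀ f, (∀ i, f ∈ Q i) → f ∈ I) (m : ℕ) : hilbF k I m ≤ ∑ i, hilbF k (Q i) m := by
  simp only [hilbF_eq_range]
  let G : homogeneousSubmodule (Fin (n+1)) k m →ₗ[k] (Π i, LinearMap.range (qmap (Q i) m)) :=
    LinearMap.pi fun i => (qmap (Q i) m).rangeRestrict
  have h1 := finrank_range_le (A := Π i, LinearMap.range (qmap (Q i) m)) G (qmap I m) (fun p hp => by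
    rw [LinearMap.mem_ker, qmap_eq_zero] at *
    refine h _ fun i => ?_
    have := congrArg Subtype.val (congrFun hp i)
    exact qmap_eq_zero.mp this)
  refine h1.trans ((Submodule.finrank_le _).trans ?_)
  have hfree : ∀ i, Module.Free k (LinearMap.range (qmap (Q i) m)) :=
    fun i => Module.Free.of_divisionRing _ _
  rw [Module.finrank_pi_fintype]

lemma sum_hilbF_le (I : Ideal (MvPolynomial (Fin (n+1)) k)) (Q : ι → Ideal (MvPolynomial (Fin (n+1)) k))
    (hI : ∀ i, I ≤ Q i) [∀ i, (Q i).IsPrime] (c : ι → ℕ) (g : ι → MvPolynomial (Fin (n+1)) k)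
    (hg : ∀ i, (g i).IsHomogeneous (c i)) (hg1 : ∀ i, g i ∉ Q i) (hg2 : ∀ i j, i ≠ j → g i ∈ Q j)
    (b : ι → ℕ) (N : ℕ) (hb : ∀ i, b i + c i = N) :
    ∑ i, hilbF k (Q i) (b i) ≤ hilbF k I N := by
  classical
  simp only [hilbF_eq_range]
  let G : (Π i, homogeneousSubmodule (Fin (n+1)) k (b i)) →ₗ[k] (Π i, LinearMap.range (qmap (Q i) (b i))) :=
    LinearMap.pi fun i => (qmap (Q i) (b i)).rangeRestrict ∘ₗ LinearMap.proj i
  have hG : LinearMap.range G = ⊤ := by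
    rw [LinearMap.range_eq_top]
    intro y
    choose x hx using fun i => (y i).2
    exact ⟨x, funext fun i => Subtype.ext (hx i)⟩
  let Ψ : (Π i, homogeneousSubmodule (Fin (n+1)) k (b i)) →ₗ[k] MvPolynomial (Fin (n+1)) k ⧸ I :=
    ∑ i, (Ideal.Quotient.mkₐ k I).toLinearMap ∘ₗ LinearMap.mulRight k (g i) ∘ₗ
      (homogeneousSubmodule (Fin (n+1)) k (b i)).subtype ∘ₗ LinearMap.proj i
  have hΨ : ∀ p, Ψ p = Ideal.Quotient.mk I (∑ i, (p i : MvPolynomial (Fin (n+1)) k) * g i) := by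
    intro p
    simp [Ψ]
  have h1 := finrank_range_le (B := Π i, LinearMap.range (qmap (Q i) (b i))) Ψ G (fun p hp => by
    rw [LinearMap.mem_ker, hΨ, Ideal.Quotient.eq_zero_iff_mem] at hp
    rw [LinearMap.mem_ker]
    funext j
    refine Subtype.ext (qmap_eq_zero.mpr ?_)
    have h2 := hI j hp
    rw [← Finset.add_sum_erase _ _ (Finset.mem_univ j)] at h2
    have h3 := (Ideal.add_mem_iff_left _ (Ideal.sum_mem _ fun i hi =>
      Ideal.mul_mem_left _ _ (hg2 i j (Finset.ne_of_mem_erase hi)))).mp h2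
    exact (Ideal.IsPrime.mem_or_mem inferInstance h3).resolve_right (hg1 j))
  have hfree : ∀ i, Module.Free k (LinearMap.range (qmap (Q i) (b i))) :=
    fun i => Module.Free.of_divisionRing _ _
  rw [hG, finrank_top, Module.finrank_pi_fintype] at h1
  refine h1.trans (Submodule.finrank_mono ?_)
  rintro _ ⟨p, rfl⟩
  refine ⟨⟨∑ i, (p i : MvPolynomial (Fin (n+1)) k) * g i, ?_⟩, (hΨ p).symm⟩
  refine IsHomogeneous.sum _ _ _ fun i _ => ?_
  rw [← hb i]
  exact IsHomogeneous.mul (p i).2 (hg i)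

lemma exists_sep {Q Q' : Ideal (MvPolynomial (Fin (n+1)) k)} (hQ : IsHomogeneousIdeal Q)
    (h : ¬ Q ≤ Q') : ∃ m, ∃ f ∈ Q, f ∉ Q' ∧ f.IsHomogeneous m := by
  by_contra! hc
  refine h fun f hf => ?_
  rw [← sum_homogeneousComponent f]
  refine Ideal.sum_mem _ fun i _ => ?_
  by_contra h2
  exact hc i _ (hQ f hf i) h2 (homogeneousComponent_isHomogeneous i f)

lemma exists_gs (Q : ι → Ideal (MvPolynomial (Fin (n+1)) k)) [hp : ∀ i, (Q i).IsPrime]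
    (hQ : ∀ i, IsHomogeneousIdeal (Q i)) (hinc : ∀ i j, i ≠ j → ¬ Q j ≤ Q i) :
    ∃ (c : ι → ℕ) (g : ι → MvPolynomial (Fin (n+1)) k), (∀ i, (g i).IsHomogeneous (c i)) ∧
      (∀ i, g i ∉ Q i) ∧ (∀ i j, i ≠ j → g i ∈ Q j) := by
  classical
  have : ∀ i j, ∃ m, ∃ f : MvPolynomial (Fin (n+1)) k, (i ≠ j → f ∈ Q j) ∧ f ∉ Q i ∧ f.IsHomogeneous m := by
    intro i j
    by_cases hij : i = j
    · exact ⟨0, 1, fun h => absurd hij h, fun h => (hp i).ne_top ((Ideal.eq_top_iff_one _).mpr h),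
        isHomogeneous_one _ _⟩
    · obtain ⟨m, f, h1, h2, h3⟩ := exists_sep (hQ j) (hinc i j hij)
      exact ⟨m, f, fun _ => h1, h2, h3⟩
  choose c f h1 h2 h3 using this
  refine ⟨fun i => ∑ j, c i j, fun i => ∏ j, f i j, fun i => ?_, fun i => ?_, fun i j hij => ?_⟩
  · exact IsHomogeneous.prod _ _ _ fun j _ => h3 i j
  · intro h
    obtain ⟨j, _, hj⟩ := (Ideal.IsPrime.prod_mem_iff (hp := hp i)).mp h
    exact h2 i j hj
  · exact Ideal.mem_of_dvd _ (Finset.dvd_prod_of_mem _ (Finset.mem_univ j)) (h1 i j hij)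

section
attribute [local instance] MvPolynomial.gradedAlgebra

lemma minimal_homog {I Q : Ideal (MvPolynomial (Fin (n+1)) k)} (hI : IsHomogeneousIdeal I)
    (hQ : Q ∈ I.minimalPrimes) : IsHomogeneousIdeal Q := by
  set Q' := Q.homogeneousCore (homogeneousSubmodule (Fin (n+1)) k) with hQ'
  have h1 : Q'.toIdeal.IsPrime := Ideal.IsPrime.homogeneousCore hQ.1.1
  have h2 : I ≤ Q'.toIdeal := by
    intro f hf
    rw [← sum_homogeneousComponent f]
    refine Ideal.sum_mem _ fun i _ => ?_
    exact Ideal.mem_homogeneousCore_of_homogeneous_of_mem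
      ⟨i, homogeneousComponent_isHomogeneous i f⟩ (hQ.1.2 (hI f hf i))
  have h3 : Q'.toIdeal ≤ Q := Ideal.toIdeal_homogeneousCore_le _ _
  have h4 : Q'.toIdeal = Q := le_antisymm h3 (hQ.2 ⟨h1, h2⟩ h3)
  intro f hf m
  rw [← h4] at hf ⊢
  exact homogeneousComponent_mem_of_mem Q'.isHomogeneous hf m

end

/-- The upper bound for the Hilbert function of an unmixed radical ideal. -/
theorem unmixed_upper {d : ℕ} (I : Ideal (MvPolynomial (Fin (n+1)) k))
    (hIhom : IsHomogeneousIdeal I) (hIrad : I.IsRadical) (hIunm : IsUnmixed k I d)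
    (hIne : hilbP k I ≠ 0) (hIdim : idealDim k I = d) (m : ℕ) :
    hilbF k I m ≤ idealDeg k I * (m + d).choose d := by
  classical
  have hfin := Ideal.finite_minimalPrimes_of_isNoetherianRing _ I
  have : Fintype I.minimalPrimes := hfin.fintype
  let Q : I.minimalPrimes → Ideal (MvPolynomial (Fin (n+1)) k) := fun i => i.1
  have hQp : ∀ i, (Q i).IsPrime := fun i => i.2.1.1
  have hQI : ∀ i, I ≤ Q i := fun i => i.2.1.2
  have hQh : ∀ i, IsHomogeneousIdeal (Q i) := fun i => minimal_homog hIhom i.2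
  have hinc : ∀ i j, i ≠ j → ¬ Q j ≤ Q i := fun i j hij hle =>
    hij (Subtype.ext (le_antisymm (i.2.2 j.2.1 hle) hle))
  have hmem : ∀ f, (∀ i, f ∈ Q i) → f ∈ I := by
    intro f hf
    rw [← hIrad.radical, ← Ideal.sInf_minimalPrimes, Ideal.mem_sInf]
    exact fun {J} hJ => hf ⟨J, hJ⟩
  have hkr : ∀ i m, (d + 1).multichoose m ≤ hilbF k (Q i) m := by
    intro i m
    have hass : Q i ∈ associatedPrimes (MvPolynomial (Fin (n+1)) k) (MvPolynomial (Fin (n+1)) k ⧸ I) := by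
      apply Module.associatedPrimes.minimalPrimes_annihilator_subset_associatedPrimes
      rw [Ideal.annihilator_quotient]
      exact i.2
    exact krull_lower (Q i) (d + 1) (hIunm _ hass).ge m
  have hW : ∀ i, linPart (Q i) ≠ ⊥ := by
    intro i h
    have h1 := hkr i 1
    rw [hilbF_eq, finrank_bot_pow h 0] at h1
    simp at h1
  choose s D c hs hD hb using fun i => prime_bounds (Q i) (hW i)
  obtain ⟨cc, g, hg0, hg1, hg2⟩ := exists_gs Q hQh hinc
  have hlow : ∀ m, ∑ i, D i * (s i).multichoose m ≤ hilbF k I (m + (∑ i, c i + ∑ i, cc i)) := by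
    intro m
    have hc : ∀ i, c i ≤ ∑ i, c i := fun i => Finset.single_le_sum (by simp) (Finset.mem_univ i)
    have hcc : ∀ i, cc i ≤ ∑ i, cc i := fun i => Finset.single_le_sum (by simp) (Finset.mem_univ i)
    refine le_trans ?_ (sum_hilbF_le I Q hQI cc g hg0 hg1 hg2
      (fun i => m + (∑ i, c i + ∑ i, cc i) - cc i) _ (fun i => by have := hcc i; omega))
    refine Finset.sum_le_sum fun i _ => ?_
    have h1 := (hb i (m + (∑ i, c i + ∑ i, cc i) - cc i - c i)).2.1
    have h2 := hc i
    have h3 := hcc i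
    rw [Nat.sub_add_cancel (by omega)] at h1
    refine le_trans (Nat.mul_le_mul_left _ (mc_mono (hs i) ?_)) h1
    omega
  have hpI := hilbP_spec hIne
  have hsd : ∀ i, s i = d + 1 := by
    intro i
    apply le_antisymm
    · obtain ⟨t, ht⟩ : ∃ t, s i = t + 1 := ⟨s i - 1, by have := hs i; omega⟩
      have h1 := (poly_lower hpI (hD i) (s := t) (c := ∑ i, c i + ∑ i, cc i) (fun m => by
        rw [← ht]
        exact (Finset.single_le_sum (f := fun i => D i * (s i).multichoose m) (by simp)
          (Finset.mem_univ i)).trans (hlow m))).1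
      have : (hilbP k I).natDegree = d := hIdim
      omega
    · exact mc_deg_le (by omega) (hs i) (D := D i) (c := 0) (fun m => (hkr i m).trans (hb i m).1)
  simp only [hsd, ← Finset.sum_mul] at hlow
  have hup : hilbF k I m ≤ (∑ i, D i) * (d + 1).multichoose m := by
    refine (hilbF_le_sum I Q hmem m).trans ?_
    rw [Finset.sum_mul]
    refine Finset.sum_le_sum fun i _ => ?_
    have := (hb i m).1
    rwa [hsd i] at this
  rw [← mc_eq]
  refine hup.trans (Nat.mul_le_mul_right _ ?_)
  rcases Nat.eq_zero_or_pos (∑ i, D i) with h0 | h0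
  · rw [h0]; exact Nat.zero_le _
  · have hdd : (hilbP k I).natDegree = d := hIdim
    rw [idealDeg, hdd]
    exact Nat.le_floor ((poly_lower hpI h0 hlow).2 hdd.symm)

end decomp

lemma final_arith {d e δ m : ℕ} (hde : d < e) (h : e.factorial * δ < (m + 1) ^ (e - d)) :
    δ * (m + d).choose d < (m + e).choose e := by
  have h1 : (m + 1).ascFactorial e = e.factorial * (m + e).choose e :=
    Nat.ascFactorial_eq_factorial_mul_choose _ _
  have h2 : (m + 1).ascFactorial d = d.factorial * (m + d).choose d :=
    Nat.ascFactorial_eq_factorial_mul_choose _ _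
  have h3 : (m + 1).ascFactorial d * (m + 1 + d).ascFactorial (e - d) = (m + 1).ascFactorial e := by
    rw [Nat.ascFactorial_mul_ascFactorial, Nat.add_sub_cancel' hde.le]
  have h4 : (m + 1) ^ (e - d) ≤ (m + 1 + d).ascFactorial (e - d) :=
    (Nat.pow_le_pow_left (by omega) _).trans (Nat.pow_succ_le_ascFactorial _ _)
  have hpos : 0 < (m + d).choose d := Nat.choose_pos (by omega)
  have hd : 1 ≤ d.factorial := Nat.factorial_pos d
  have he : 0 < e.factorial := Nat.factorial_pos e
  refine lt_of_mul_lt_mul_left (a := e.factorial) ?_ he.le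
  rw [← h1, ← h3, h2]
  calc e.factorial * (δ * (m + d).choose d) = (m + d).choose d * (e.factorial * δ) := by ring
    _ < (m + d).choose d * (m + 1 + d).ascFactorial (e - d) :=
        Nat.mul_lt_mul_of_pos_left (h.trans_le h4) hpos
    _ ≤ _ := Nat.mul_le_mul_right _ (Nat.le_mul_of_pos_left _ hd)

/-- given `I` unmixed radical of projective dimension `d` and a
homogeneous prime `P` of projective dimension `e > d`, there is a homogeneous
`f ∈ I ∖ P` of degree at most `(e! · deg I)^{1/(e−d)}`. -/
theorem exists_low_degree_element_outside_prime {k : Type*} [Field k]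
    [PerfectField k] {n d e : ℕ}
    (I P : Ideal (MvPolynomial (Fin (n+1)) k))
    (hIhom : IsHomogeneousIdeal I) (hIrad : I.IsRadical) (hIunm : IsUnmixed k I d)
    (hIne : hilbP k I ≠ 0) (hIdim : idealDim k I = d)
    (hPhom : IsHomogeneousIdeal P) (hPprime : P.IsPrime)
    (hPne : hilbP k P ≠ 0) (hPdim : idealDim k P = e) (hde : d < e) :
    ∃ f ∈ I, f ∉ P ∧ ∃ m : ℕ, f.IsHomogeneous m ∧
      (m : ℝ) ≤ ((e.factorial * idealDeg k I : ℕ) : ℝ) ^ ((1 : ℝ) / ((e : ℝ) - d)) := by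
  set a : ℕ := e.factorial * idealDeg k I with ha
  set x : ℝ := (a : ℝ) ^ ((1 : ℝ) / ((e : ℝ) - d)) with hx
  have hx0 : 0 ≤ x := Real.rpow_nonneg (Nat.cast_nonneg _) _
  have hcast : ((e - d : ℕ) : ℝ) = (e : ℝ) - d := Nat.cast_sub hde.le
  have hxa : x ^ (e - d) = (a : ℝ) := by
    rw [hx, ← hcast, one_div]
    exact Real.rpow_inv_natCast_pow (Nat.cast_nonneg _) (by omega)
  have hlt : a < (⌊x⌋₊ + 1) ^ (e - d) := by
    have : (a : ℝ) < ((⌊x⌋₊ : ℝ) + 1) ^ (e - d) := by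
      rw [← hxa]
      exact pow_lt_pow_left₀ (Nat.lt_floor_add_one x) hx0 (by omega)
    exact_mod_cast this
  have h1 := final_arith hde hlt
  have h2 := prime_lower P hPne hPdim ⌊x⌋₊
  have h3 := unmixed_upper I hIhom hIrad hIunm hIne hIdim ⌊x⌋₊
  by_contra! hc
  have h4 := hilbF_le_of I P ⌊x⌋₊ (fun f hf hfm => by
    by_contra hfP
    exact absurd (Nat.floor_le hx0) (not_le.mpr (hc f hf hfP ⌊x⌋₊ hfm)))
  omega
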